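/- Let (Ω, P) be a probability space, X a random feature vector, Y a {0,1}-valued random label, and ε a {0,1}-valued random variable independent of (X, Y) with P(ε = 1) = γ. Define Ỹ = εY + (1−ε)(1−Y). Let ℓ : ℝ → ℝ be a label-symmetric loss with constant c (i.e., ℓ(α) + ℓ(−α) = c for all α ≠ 0). Let f be a measurable scorer with f(X) ≠ 0 almost surely and with ℓ(f(X)(2Y−1)) integrable. Then the noisy pointwise risk is an affine transform of the clean risk: L̃(f) = (2γ−1)·L(f) + c(1−γ). -/

import Mathlib

open MeasureTheory ProbabilityTheory

/-!
Flipping a label negates the margin, so label symmetry replaces the loss `L` by `c - L`. The noisy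
loss is therefore `L` multiplied by the sign `2e - 1`, plus `c (1 - e)`. Since `e` is independent of
`L`, the expectation of the product factors.
-/

/-- The margin `s (2y - 1)` of a real score `s` against a label `y ∈ {0, 1}`, at which a margin
loss is evaluated; `2y - 1` recodes the label as a sign. The label is encoded as a real number. -/
def margin (s y : ℝ) : ℝ := s * (2 * y - 1)

/-- The label `ỹ = e y + (1 - e)(1 - y)` observed under label noise: `y` is kept when `e = 1` and
flipped when `e = 0`. -/
def noisyLabel (e y : ℝ) : ℝ := e * y + (1 - e) * (1 - y)

/-- Label symmetry of a loss, with its constant `c` made explicit. The origin is left out, so that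
losses such as the zero-one loss, with any convention at `0`, are included. -/
def IsLabelSymmetric (ℓ : ℝ → ℝ) (c : ℝ) : Prop := ∀ α : ℝ, α ≠ 0 → ℓ α + ℓ (-α) = c

/-- The pointwise risk `E[ℓ(S (2Y - 1))]` of a random score `S`, which stands for `f(X)`, against
the label `Y`. It is a Bochner integral, hence `0` if the loss is not integrable. -/
noncomputable def pointwiseRisk {Ω : Type*} [MeasurableSpace Ω] (P : Measure Ω) (ℓ : ℝ → ℝ)
    (S Y : Ω → ℝ) : ℝ :=
  ∫ ω, ℓ (margin (S ω) (Y ω)) ∂P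

lemma margin_ne_zero {s y : ℝ} (hs : s ≠ 0) (hy : y = 0 ∨ y = 1) : margin s y ≠ 0 := by
  rcases hy with rfl | rfl <;> norm_num [margin, hs]

lemma margin_noisyLabel (s e y : ℝ) : margin s (noisyLabel e y) = (2 * e - 1) * margin s y := by
  simp only [margin, noisyLabel]
  ring

lemma IsLabelSymmetric.apply_sign_mul {ℓ : ℝ → ℝ} {c e α : ℝ} (hℓ : IsLabelSymmetric ℓ c)
    (he : e = 0 ∨ e = 1) (hα : α ≠ 0) :
    ℓ ((2 * e - 1) * α) = (2 * e - 1) * ℓ α + c * (1 - e) := by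
  rcases he with rfl | rfl
  · have flipped : ℓ (-α) = c - ℓ α := eq_sub_of_add_eq' (hℓ α hα)
    norm_num [flipped]
    ring
  · norm_num

section Expectation

variable {Ω : Type*} [MeasurableSpace Ω] {P : Measure Ω} {e : Ω → ℝ}

lemma integrable_of_ae_eq_zero_or_one [IsFiniteMeasure P] (he : AEMeasurable e P)
    (heval : ∀ᵐ ω ∂P, e ω = 0 ∨ e ω = 1) : Integrable e P := by
  refine Integrable.of_bound he.aestronglyMeasurable 1 ?_
  filter_upwards [heval] with ω hω
  rcases hω with h | h <;> simp [h]

variable [IsProbabilityMeasure P]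

lemma integral_sign_mul_add_of_indepFun {L : Ω → ℝ} (he : Integrable e P) (hL : Integrable L P)
    (hindep : IndepFun L e P) (c : ℝ) :
    ∫ ω, ((2 * e ω - 1) * L ω + c * (1 - e ω)) ∂P
      = (2 * ∫ ω, e ω ∂P - 1) * ∫ ω, L ω ∂P + c * (1 - ∫ ω, e ω ∂P) := by
  have hsign : Integrable (fun ω => 2 * e ω - 1) P := (he.const_mul 2).sub (integrable_const 1)
  have hkeep : Integrable (fun ω => 1 - e ω) P := (integrable_const 1).sub he
  have hsign_indep : IndepFun (fun ω => 2 * e ω - 1) L P :=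
    hindep.symm.comp (φ := fun t => 2 * t - 1) (by fun_prop) measurable_id
  have hsign_mul : Integrable (fun ω => (2 * e ω - 1) * L ω) P :=
    hsign_indep.integrable_mul hsign hL
  rw [integral_add hsign_mul (hkeep.const_mul c),
    hsign_indep.integral_fun_mul_eq_mul_integral hsign.aestronglyMeasurable
      hL.aestronglyMeasurable,
    integral_sub (he.const_mul 2) (integrable_const 1), integral_const_mul, integral_const_mul,
    integral_sub (integrable_const 1) he, integral_const, probReal_univ, one_smul]

theorem label_symmetric_noisy_risk_affine_general {S Y : Ω → ℝ} {ℓ : ℝ → ℝ} {c γ : ℝ}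
    (hℓ : IsLabelSymmetric ℓ c) (he : AEMeasurable e P) (heval : ∀ᵐ ω ∂P, e ω = 0 ∨ e ω = 1)
    (heγ : P.real {ω | e ω = 1} = γ)
    (hindep : IndepFun (fun ω => ℓ (margin (S ω) (Y ω))) e P)
    (hmargin : ∀ᵐ ω ∂P, margin (S ω) (Y ω) ≠ 0)
    (hint : Integrable (fun ω => ℓ (margin (S ω) (Y ω))) P) :
    pointwiseRisk P ℓ S (fun ω => noisyLabel (e ω) (Y ω))
      = (2 * γ - 1) * pointwiseRisk P ℓ S Y + c * (1 - γ) := by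
  have noisy_loss : ∀ᵐ ω ∂P, ℓ (margin (S ω) (noisyLabel (e ω) (Y ω)))
      = (2 * e ω - 1) * ℓ (margin (S ω) (Y ω)) + c * (1 - e ω) := by
    filter_upwards [heval, hmargin] with ω hω hω'
    rw [margin_noisyLabel, hℓ.apply_sign_mul hω hω']
  have integral_e : ∫ ω, e ω ∂P = γ := (integral_of_ae_eq_zero_or_one he heval).trans heγ
  unfold pointwiseRisk
  rw [integral_congr_ae noisy_loss,
    integral_sign_mul_add_of_indepFun (integrable_of_ae_eq_zero_or_one he heval) hint hindep,
    integral_e]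

end Expectation

/-- For a label-symmetric loss `ℓ` (with `ℓ(α) + ℓ(-α) = c` for all `α ≠ 0`),
under class-conditional label noise `Ỹ = εY + (1-ε)(1-Y)` with `ε ⟂ (X,Y)` and `P(ε=1) = γ`,
and a scorer `f` with `f(X) ≠ 0` a.s., the noisy pointwise risk is an affine transform of
the clean risk: `L̃(f) = (2γ-1) L(f) + c (1-γ)`. -/
theorem label_symmetric_noisy_risk_affine
    {Ω : Type*} [MeasurableSpace Ω] (P : Measure Ω) [IsProbabilityMeasure P]
    {𝒳 : Type*} [MeasurableSpace 𝒳]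
    (X : Ω → 𝒳) (Y e : Ω → ℝ) (γ : ℝ)
    (hX : Measurable X) (hY : Measurable Y) (he : Measurable e)
    (hYval : ∀ ω, Y ω = 0 ∨ Y ω = 1)
    (heval : ∀ ω, e ω = 0 ∨ e ω = 1)
    (hγ : γ ∈ Set.Icc (0 : ℝ) 1)
    (hindep : IndepFun (fun ω => (X ω, Y ω)) e P)
    (heγ : P {ω | e ω = 1} = ENNReal.ofReal γ)
    (ℓ : ℝ → ℝ) (c : ℝ) (hsym : ∀ α : ℝ, α ≠ 0 → ℓ α + ℓ (-α) = c)
    (f : 𝒳 → ℝ) (hℓ : Measurable ℓ) (hf : Measurable f)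
    (hf0 : ∀ᵐ ω ∂P, f (X ω) ≠ 0)
    (hint : Integrable (fun ω => ℓ (f (X ω) * (2 * Y ω - 1))) P) :
    ∫ ω, ℓ (f (X ω) * (2 * (e ω * Y ω + (1 - e ω) * (1 - Y ω)) - 1)) ∂P
      = (2 * γ - 1) * ∫ ω, ℓ (f (X ω) * (2 * Y ω - 1)) ∂P + c * (1 - γ) := by
  have noise_level : P.real {ω | e ω = 1} = γ := by
    rw [measureReal_def, heγ, ENNReal.toReal_ofReal hγ.1]
  have loss_measurable : Measurable fun p : 𝒳 × ℝ => ℓ (margin (f p.1) p.2) := by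
    unfold margin
    fun_prop
  have margin_ne : ∀ᵐ ω ∂P, margin (f (X ω)) (Y ω) ≠ 0 :=
    hf0.mono fun ω hω => margin_ne_zero hω (hYval ω)
  exact label_symmetric_noisy_risk_affine_general hsym he.aemeasurable (ae_of_all P heval)
    noise_level (hindep.comp loss_measurable measurable_id) margin_ne hint
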